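/- Let f : ℝ² → ℝ be of class C² satisfying (i) D²f(p)(q,q) > 0 for all p, q ∈ ℝ² with q ≠ 0, and (ii) there is a constant Λ > 0 with |D²f(p)| ≤ Λ/(1+|p|) for all p ∈ ℝ². Let u ∈ C²(ℝ²) be an entire solution of div[Df(∇u)] = 0 on ℝ². If there is a constant K > 0 such that |∂₂u(x)| · ln²(1+|∂₂u(x)|) ≤ K(|∂₁u(x)| + 1) for all x ∈ ℝ², then u is an affine function, i.e. there exist a, b, c ∈ ℝ with u(x₁,x₂) = a x₁ + b x₂ + c. -/

import Mathlib

open Real MeasureTheory Metric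
open scoped ENNReal

noncomputable section

/-- `ℝ²` with its Euclidean structure. -/
abbrev E2 : Type := EuclideanSpace ℝ (Fin 2)

/-- The `i`-th standard basis vector of `ℝ²`. -/
def ee (i : Fin 2) : E2 := EuclideanSpace.single i 1

/-- The Hessian bilinear form `D²f(p)(q,q)`. -/
def Hess (f : E2 → ℝ) (p q : E2) : ℝ := iteratedFDeriv ℝ 2 f p ![q, q]

/-- The partial derivative `∂ᵢu(x)`. -/
def pd (u : E2 → ℝ) (i : Fin 2) (x : E2) : ℝ := fderiv ℝ u x (ee i)

/-- The equation `div [Df(∇u)] = 0`, i.e. `∑ i, ∂ᵢ[(∂f/∂pᵢ)(∇u(x))] = 0` on `ℝ²`. -/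
def solves (f u : E2 → ℝ) : Prop :=
  ∀ x : E2, ∑ i : Fin 2, fderiv ℝ (fun y => fderiv ℝ f (gradient u y) (ee i)) x (ee i) = 0

/-- The derivative of `arctan ∘ arsinh` decays no faster than `1 / (|t| log² |t|)`. -/
lemma one_add_arsinh_sq_mul_sqrt_le (t : ℝ) :
    (1 + arsinh t ^ 2) * √(1 + t ^ 2) ≤ 16 * (1 + |t| * Real.log (1 + |t|) ^ 2) := by
  have hsq : √(1 + t ^ 2) ≤ 1 + |t| := by
    rw [Real.sqrt_le_left (by positivity)]
    nlinarith [abs_nonneg t, sq_abs t]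
  have hars : arsinh t ^ 2 = arsinh |t| ^ 2 := by
    rcases abs_cases t with ⟨h, _⟩ | ⟨h, _⟩ <;> simp [h, arsinh_neg]
  have hs : 0 ≤ |t| := abs_nonneg t
  rw [hars, ← sq_abs t] at *
  generalize |t| = s at *
  have hL0 : 0 ≤ Real.log (1 + s) := Real.log_nonneg (by linarith)
  have hLs : Real.log (1 + s) ≤ s := by
    linarith [Real.log_le_sub_one_of_pos (show 0 < 1 + s by linarith)]
  have ha0 : 0 ≤ arsinh s := arsinh_nonneg_iff.2 hs
  have ha1 : arsinh s ≤ 1 + Real.log (1 + s) := by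
    have h2 : Real.log 2 ≤ 1 := by linarith [Real.log_two_lt_d9]
    calc arsinh s ≤ Real.log (2 * (1 + s)) := by
          rw [arsinh]
          exact Real.log_le_log (by positivity) (by linarith)
      _ = Real.log 2 + Real.log (1 + s) := Real.log_mul (by norm_num) (by positivity)
      _ ≤ 1 + Real.log (1 + s) := by linarith
  have hlog : 1 ≤ s → 1 / 2 ≤ Real.log (1 + s) := fun h1 => by
    have := Real.log_le_log (show (0 : ℝ) < 2 by norm_num) (show (2 : ℝ) ≤ 1 + s by linarith)
    linarith [Real.log_two_gt_d9]
  generalize Real.log (1 + s) = L at *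
  have ha2 : arsinh s ^ 2 ≤ 2 + 2 * L ^ 2 := by nlinarith [sq_nonneg (L - 1)]
  have hL2 : L ^ 2 ≤ 1 + s * L ^ 2 := by
    rcases le_total 1 s with h | h
    · nlinarith [sq_nonneg L]
    · nlinarith [mul_nonneg hs (sq_nonneg L)]
  have hs1 : s ≤ 1 + 4 * (s * L ^ 2) := by
    rcases le_total 1 s with h | h
    · have := hlog h
      have h4 : 1 ≤ 4 * L ^ 2 := by nlinarith
      nlinarith
    · nlinarith [mul_nonneg hs (sq_nonneg L)]
  calc (1 + arsinh s ^ 2) * √(1 + s ^ 2) ≤ (3 + 2 * L ^ 2) * (1 + s) :=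
        mul_le_mul (by linarith) hsq (by positivity) (by positivity)
    _ ≤ 16 * (1 + s * L ^ 2) := by nlinarith [mul_nonneg hs (sq_nonneg L)]

/-- Smooth cutoff functions between concentric balls of radii `R` and `2 * R`, with gradient of
order `1 / R`. -/
lemma exists_cutoff : ∃ C : ℝ, 0 ≤ C ∧ ∀ R : ℝ, 0 < R → ∃ η : E2 → ℝ, ContDiff ℝ 1 η ∧
    HasCompactSupport η ∧ (∀ x, 0 ≤ η x ∧ η x ≤ 1) ∧
    (∀ x ∈ ball (0 : E2) R, η x = 1 ∧ fderiv ℝ η x = 0) ∧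
    (∀ x, x ∉ ball (0 : E2) (2 * R) → η x = 0) ∧ ∀ x, ‖fderiv ℝ η x‖ ≤ C / R := by
  let b : ContDiffBump (0 : E2) := ⟨1, 2, by norm_num, by norm_num⟩
  obtain ⟨C, hC⟩ := (b.hasCompactSupport.fderiv ℝ).exists_bound_of_continuous
    ((b.contDiff (n := 1)).continuous_fderiv one_ne_zero)
  refine ⟨C, (norm_nonneg _).trans (hC 0), fun R hR => ?_⟩
  have hder : ∀ x, fderiv ℝ (fun y : E2 => b (R⁻¹ • y)) x = R⁻¹ • fderiv ℝ b (R⁻¹ • x) := by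
    intro x
    exact fderiv_comp_smul (f := (b : E2 → ℝ)) R⁻¹
  have hball : ∀ x ∈ ball (0 : E2) R, R⁻¹ • x ∈ ball (0 : E2) b.rIn := by
    intro x hx
    rw [mem_ball_zero_iff] at hx ⊢
    rw [norm_smul, norm_inv, Real.norm_of_nonneg hR.le, inv_mul_lt_iff₀ hR]
    simpa [b] using hx
  refine ⟨fun y => b (R⁻¹ • y), b.contDiff.comp (contDiff_const_smul _), ?_,
    fun x => ⟨b.nonneg, b.le_one⟩, fun x hx => ⟨?_, ?_⟩, fun x hx => ?_, fun x => ?_⟩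
  · exact b.hasCompactSupport.comp_homeomorph (Homeomorph.smulOfNeZero R⁻¹ (inv_ne_zero hR.ne'))
  · exact b.one_of_mem_closedBall (ball_subset_closedBall (hball x hx))
  · rw [hder, (b.eventuallyEq_one_of_mem_ball (hball x hx)).fderiv_eq]
    simp
  · apply b.zero_of_le_dist
    rw [mem_ball_zero_iff, not_lt] at hx
    rw [dist_zero_right, norm_smul, norm_inv, Real.norm_of_nonneg hR.le, le_inv_mul_iff₀ hR]
    simpa [b, mul_comm] using hx
  · rw [hder, norm_smul, norm_inv, Real.norm_of_nonneg hR.le, div_eq_inv_mul]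
    gcongr
    exact hC _

/-- A divergence-free `C¹` vector field is orthogonal to gradients of test functions. -/
lemma integral_sum_mul_fderiv_eq_zero {F : Fin 2 → E2 → ℝ} (hF : ∀ i, ContDiff ℝ 1 (F i))
    (hdiv : ∀ x, ∑ i, fderiv ℝ (F i) x (ee i) = 0) {φ : E2 → ℝ} (hφ : ContDiff ℝ 1 φ)
    (hc : HasCompactSupport φ) :
    ∫ x, ∑ i, F i x * fderiv ℝ φ x (ee i) = 0 := by
  have hcd : ∀ i, HasCompactSupport fun x => fderiv ℝ φ x (ee i) := fun i =>
    hc.fderiv_apply ℝ (ee i)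
  have hφ' : ∀ i, Continuous fun x => fderiv ℝ φ x (ee i) := fun i =>
    (hφ.continuous_fderiv one_ne_zero).clm_apply continuous_const
  have hF' : ∀ i, Continuous fun x => fderiv ℝ (F i) x (ee i) := fun i =>
    ((hF i).continuous_fderiv one_ne_zero).clm_apply continuous_const
  have hint : ∀ i, Integrable fun x => F i x * fderiv ℝ φ x (ee i) := fun i =>
    ((hF i).continuous.mul (hφ' i)).integrable_of_hasCompactSupport (hcd i).mul_left
  have hint' : ∀ i, Integrable fun x => fderiv ℝ (F i) x (ee i) * φ x := fun i =>
    ((hF' i).mul hφ.continuous).integrable_of_hasCompactSupport hc.mul_left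
  rw [integral_finsetSum _ fun i _ => hint i]
  have hparts : ∀ i, ∫ x, F i x * fderiv ℝ φ x (ee i) = -∫ x, fderiv ℝ (F i) x (ee i) * φ x :=
    fun i => integral_mul_fderiv_eq_neg_fderiv_mul_of_integrable (hint' i) (hint i)
      (((hF i).continuous.mul hφ.continuous).integrable_of_hasCompactSupport hc.mul_left)
      (fun x _ => (hF i).differentiable one_ne_zero x)
      (fun x _ => hφ.differentiable one_ne_zero x)
  rw [Finset.sum_congr rfl fun i _ => hparts i, Finset.sum_neg_distrib,
    ← integral_finsetSum _ fun i _ => hint' i]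
  simp [← Finset.sum_mul, hdiv]

/-- A directional derivative of a divergence-free `C¹` vector field is weakly divergence-free. -/
lemma integral_sum_fderiv_mul_fderiv_eq_zero {F : Fin 2 → E2 → ℝ} (hF : ∀ i, ContDiff ℝ 1 (F i))
    (hdiv : ∀ x, ∑ i, fderiv ℝ (F i) x (ee i) = 0) (v : E2) {φ : E2 → ℝ} (hφ : ContDiff ℝ 1 φ)
    (hc : HasCompactSupport φ) :
    ∫ x, ∑ i, fderiv ℝ (F i) x v * fderiv ℝ φ x (ee i) = 0 := by
  have hφ' : ∀ i, Continuous fun x => fderiv ℝ φ x (ee i) := fun i =>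
    (hφ.continuous_fderiv one_ne_zero).clm_apply continuous_const
  have hF' : ∀ i, Continuous fun x => fderiv ℝ (F i) x v := fun i =>
    ((hF i).continuous_fderiv one_ne_zero).clm_apply continuous_const
  have hzero : ∀ x, x ∉ tsupport φ → fderiv ℝ φ x = 0 := fun x hx =>
    image_eq_zero_of_notMem_tsupport fun h => hx (tsupport_fderiv_subset ℝ h)
  have htr : ∀ t : ℝ, ∫ x, ∑ i, F i (x + t • v) * fderiv ℝ φ x (ee i) = 0 := fun t =>
    integral_sum_mul_fderiv_eq_zero (F := fun i x => F i (x + t • v))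
      (fun i => (hF i).comp (contDiff_id.add contDiff_const))
      (fun x => by simpa [fderiv_comp_add_right] using hdiv (x + t • v)) hφ hc
  have hcont : Continuous fun z : ℝ × E2 =>
      ∑ i, fderiv ℝ (F i) (z.2 + z.1 • v) v * fderiv ℝ φ z.2 (ee i) :=
    continuous_finsetSum _ fun i _ => ((hF' i).comp (by fun_prop)).mul
      ((hφ' i).comp continuous_snd)
  obtain ⟨M, hM⟩ := ((isCompact_closedBall (0 : ℝ) 1).prod hc).exists_bound_of_continuousOn
    hcont.continuousOn
  have key := hasDerivAt_integral_of_dominated_loc_of_deriv_le (μ := (volume : Measure E2))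
    (F := fun (t : ℝ) x => ∑ i, F i (x + t • v) * fderiv ℝ φ x (ee i))
    (F' := fun t x => ∑ i, fderiv ℝ (F i) (x + t • v) v * fderiv ℝ φ x (ee i))
    (x₀ := (0 : ℝ)) (bound := (tsupport φ).indicator fun _ => M)
    (closedBall_mem_nhds (0 : ℝ) one_pos) ?_ ?_ ?_ ?_ ?_ ?_
  · have h := key.2
    simp only [htr, zero_smul, add_zero] at h
    exact h.unique (hasDerivAt_const _ _)
  · refine Filter.Eventually.of_forall fun t => Continuous.aestronglyMeasurable ?_
    exact continuous_finsetSum _ fun i _ =>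
      ((hF i).continuous.comp (by fun_prop)).mul (hφ' i)
  · refine Continuous.integrable_of_hasCompactSupport (continuous_finsetSum _ fun i _ =>
      ((hF i).continuous.comp (by fun_prop)).mul (hφ' i))
      (HasCompactSupport.intro hc fun x hx => by simp [hzero x hx])
  · exact (hcont.comp (by fun_prop : Continuous fun x : E2 => ((0 : ℝ), x))).aestronglyMeasurable
  · refine Filter.Eventually.of_forall fun x t ht => ?_
    by_cases hx : x ∈ tsupport φ
    · rw [Set.indicator_of_mem hx]
      exact hM (t, x) ⟨ht, hx⟩
    · simp [hzero x hx, hx]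
  · exact (integrable_indicator_iff (isClosed_tsupport φ).measurableSet).2
      (integrableOn_const hc.measure_lt_top.ne)
  · refine Filter.Eventually.of_forall fun x t _ => HasDerivAt.fun_sum fun i _ => ?_
    refine HasDerivAt.mul_const ?_ _
    have h1 : HasDerivAt (fun s : ℝ => x + s • v) v t := by
      simpa using ((hasDerivAt_id t).smul_const v).const_add x
    exact ((hF i).differentiable one_ne_zero _).hasFDerivAt.comp_hasDerivAt t h1

lemma volume_real_ball_two_mul {R : ℝ} (hR : 0 < R) :
    volume.real (ball (0 : E2) (2 * R)) = 4 * R ^ 2 * volume.real (ball (0 : E2) 1) := by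
  rw [measureReal_def, Measure.addHaar_ball volume (0 : E2) (by positivity : 0 ≤ 2 * R),
    ENNReal.toReal_mul, ENNReal.toReal_ofReal (by positivity), measureReal_def]
  simp only [finrank_euclideanSpace, Fintype.card_fin]
  ring

/-- A Caccioppoli inequality at all scales forces a density on the plane to vanish, since the plane
has quadratic volume growth. -/
lemma eq_zero_of_caccioppoli {ψ : E2 → ℝ} (hψ : Continuous ψ) (h0 : ∀ x, 0 ≤ ψ x) {C : ℝ}
    (hC : 0 ≤ C)
    (h : ∀ η : E2 → ℝ, ContDiff ℝ 1 η → HasCompactSupport η → ∃ X : E2 → ℝ, Continuous X ∧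
      (∀ x, η x = 0 → X x = 0) ∧ (∀ x, fderiv ℝ η x = 0 → X x = 0) ∧
      ∫ x, η x ^ 2 * ψ x = ∫ x, X x ∧
      ∀ ε, 0 < ε → ∀ x, X x ≤ ε * (η x ^ 2 * ψ x) + C / ε * ‖fderiv ℝ η x‖ ^ 2) :
    ∀ x, ψ x = 0 := by
  obtain ⟨C₁, hC₁, hcut⟩ := exists_cutoff
  set D : ℝ := C * C₁ ^ 2 * 4 * volume.real (ball (0 : E2) 1) with hD
  set S : ℝ → ℝ := fun R => ∫ x in ball (0 : E2) R, ψ x with hS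
  have hSint : ∀ R, IntegrableOn ψ (ball (0 : E2) R) := fun R =>
    (hψ.continuousOn.integrableOn_compact (isCompact_closedBall (0 : E2) R)).mono_set
      ball_subset_closedBall
  have hIint : ∀ R, Integrable ((ball (0 : E2) R).indicator ψ) := fun R =>
    (hSint R).integrable_indicator measurableSet_ball
  have hconst : ∀ R c : ℝ, Integrable ((ball (0 : E2) R).indicator fun _ => c) := fun R c =>
    (integrableOn_const measure_ball_lt_top.ne).integrable_indicator measurableSet_ball
  have hconst_eq : ∀ R ε : ℝ, 0 < R → 0 < ε →
      ∫ x, (ball (0 : E2) (2 * R)).indicator (fun _ => C / ε * (C₁ / R) ^ 2) x = D / ε := by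
    intro R ε hR hε
    rw [integral_indicator measurableSet_ball, setIntegral_const, volume_real_ball_two_mul hR,
      smul_eq_mul, hD]
    field_simp
  have main : ∀ R, 0 < R → S R ≤ 4 * D ∧
      ∀ ε, 0 < ε → S R ≤ ε * (S (2 * R) - S R) + D / ε := by
    intro R hR
    obtain ⟨η, hη, hηc, hη01, hη1, hη0, hηd⟩ := hcut R hR
    obtain ⟨X, hX, hXη, hXd, hXint, hXle⟩ := h η hη hηc
    have hT : Integrable fun x => η x ^ 2 * ψ x :=
      ((hη.continuous.pow 2).mul hψ).integrable_of_hasCompactSupport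
        (HasCompactSupport.intro hηc fun x hx => by
          simp [image_eq_zero_of_notMem_tsupport hx])
    have hXi : Integrable X := hX.integrable_of_hasCompactSupport
      (HasCompactSupport.intro hηc fun x hx => hXη x (image_eq_zero_of_notMem_tsupport hx))
    have hST : S R ≤ ∫ x, η x ^ 2 * ψ x := by
      simp only [hS]
      rw [← integral_indicator measurableSet_ball]
      refine integral_mono (hIint R) hT fun x => ?_
      by_cases hx : x ∈ ball (0 : E2) R
      · simp [Set.indicator_of_mem hx, (hη1 x hx).1]
      · simpa [Set.indicator_of_notMem hx] using mul_nonneg (sq_nonneg (η x)) (h0 x)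
    have hgrad : ∀ ε, 0 < ε → ∀ x,
        C / ε * ‖fderiv ℝ η x‖ ^ 2 ≤ C / ε * (C₁ / R) ^ 2 := fun ε hε x => by
      have := hηd x
      gcongr
    constructor
    · have hle : ∫ x, X x ≤ ∫ x, (1 / 2 * (η x ^ 2 * ψ x) +
          (ball (0 : E2) (2 * R)).indicator (fun _ => C / (1 / 2) * (C₁ / R) ^ 2) x) := by
        refine integral_mono hXi ((hT.const_mul _).add (hconst _ _)) fun x => ?_
        by_cases hx : x ∈ ball (0 : E2) (2 * R)
        · simp only [Set.indicator_of_mem hx]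
          linarith [hXle (1 / 2) (by norm_num) x, hgrad (1 / 2) (by norm_num) x]
        · simp [Set.indicator_of_notMem hx, hXη x (hη0 x hx), hη0 x hx]
      rw [integral_add (hT.const_mul _) (hconst _ _), integral_const_mul,
        hconst_eq R _ hR (by norm_num), ← hXint] at hle
      linarith
    · intro ε hε
      have hdiff : Integrable fun x => ε * ((ball (0 : E2) (2 * R)).indicator ψ x -
          (ball (0 : E2) R).indicator ψ x) := ((hIint _).sub (hIint _)).const_mul _
      have hle : ∫ x, X x ≤ ∫ x, (ε * ((ball (0 : E2) (2 * R)).indicator ψ x -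
          (ball (0 : E2) R).indicator ψ x) +
          (ball (0 : E2) (2 * R)).indicator (fun _ => C / ε * (C₁ / R) ^ 2) x) := by
        refine integral_mono hXi (hdiff.add (hconst _ _)) fun x => ?_
        by_cases hx : x ∈ ball (0 : E2) (2 * R)
        · by_cases hx' : x ∈ ball (0 : E2) R
          · simp only [Set.indicator_of_mem hx, Set.indicator_of_mem hx', hXd x (hη1 x hx').2]
            have : 0 ≤ C / ε * (C₁ / R) ^ 2 := by positivity
            linarith
          · simp only [Set.indicator_of_mem hx, Set.indicator_of_notMem hx']
            have hsq : η x ^ 2 * ψ x ≤ ψ x :=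
              mul_le_of_le_one_left (h0 x) (pow_le_one₀ (hη01 x).1 (hη01 x).2)
            have := mul_le_mul_of_nonneg_left hsq hε.le
            linarith [hXle ε hε x, hgrad ε hε x]
        · have hx' : x ∉ ball (0 : E2) R := fun hm =>
            hx (ball_subset_ball (by linarith) hm)
          simp [Set.indicator_of_notMem hx, Set.indicator_of_notMem hx', hXη x (hη0 x hx)]
      rw [integral_add hdiff (hconst _ _), integral_const_mul,
        integral_sub (hIint _) (hIint _), integral_indicator measurableSet_ball,
        integral_indicator measurableSet_ball, hconst_eq R ε hR hε, ← hXint] at hle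
      exact hST.trans hle
  have hcov : AECover (volume : Measure E2) Filter.atTop fun R : ℝ => ball (0 : E2) R :=
    aecover_ball Filter.tendsto_id
  have hint : Integrable ψ := hcov.integrable_of_integral_bounded_of_nonneg_ae (4 * D) hSint
    (Filter.Eventually.of_forall h0)
    ((Filter.eventually_gt_atTop 0).mono fun R hR => (main R hR).1)
  have hlim : Filter.Tendsto S Filter.atTop (nhds (∫ x, ψ x)) :=
    hcov.integral_tendsto_of_countably_generated hint
  have hlim2 : Filter.Tendsto (fun R => S (2 * R)) Filter.atTop (nhds (∫ x, ψ x)) :=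
    hlim.comp (Filter.tendsto_id.const_mul_atTop two_pos)
  have hbound : ∀ ε, 0 < ε → ∫ x, ψ x ≤ D / ε := by
    intro ε hε
    have hr := ((hlim2.sub hlim).const_mul ε).add_const (D / ε)
    rw [sub_self, mul_zero, zero_add] at hr
    exact le_of_tendsto_of_tendsto hlim hr
      ((Filter.eventually_gt_atTop 0).mono fun R hR => (main R hR).2 ε hε)
  have hle0 : ∫ x, ψ x ≤ 0 :=
    ge_of_tendsto (tendsto_const_nhds.div_atTop Filter.tendsto_id)
      ((Filter.eventually_gt_atTop 0).mono hbound)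
  have hzero : ∫ x, ψ x = 0 := le_antisymm hle0 (integral_nonneg h0)
  rw [integral_eq_zero_iff_of_nonneg h0 hint] at hzero
  exact congrFun ((hψ.ae_eq_iff_eq volume continuous_const).1 hzero)

lemma fderiv_fderiv_comm {g : E2 → ℝ} (hg : ContDiff ℝ 2 g) (x a b : E2) :
    fderiv ℝ (fderiv ℝ g) x a b = fderiv ℝ (fderiv ℝ g) x b a :=
  hg.contDiffAt.isSymmSndFDerivAt (by simp) a b

lemma Hess_eq (f : E2 → ℝ) (p q : E2) : Hess f p q = fderiv ℝ (fderiv ℝ f) p q q := by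
  simp [Hess, iteratedFDeriv_two_apply]

lemma eq_sum_smul_ee (x : E2) : x = x 0 • ee 0 + x 1 • ee 1 := by
  ext i
  fin_cases i <;> simp [ee]

lemma contDiff_gradient {u : E2 → ℝ} (hu : ContDiff ℝ 2 u) : ContDiff ℝ 1 (gradient u) :=
  (InnerProductSpace.toDual ℝ E2).symm.toContinuousLinearEquiv.contDiff.comp
    (hu.fderiv_right (m := 1) (by norm_num))

lemma gradient_apply (u : E2 → ℝ) (x : E2) (i : Fin 2) : gradient u x i = pd u i x := by
  have h := InnerProductSpace.toDual_symm_apply (𝕜 := ℝ) (x := ee i) (y := fderiv ℝ u x)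
  rw [pd, ← h, gradient, ee, EuclideanSpace.inner_single_right]
  simp

lemma hasFDerivAt_pd {u : E2 → ℝ} (hu : ContDiff ℝ 2 u) (i : Fin 2) (x : E2) :
    HasFDerivAt (pd u i) ((fderiv ℝ (fderiv ℝ u) x).flip (ee i)) x :=
  (ContinuousLinearMap.apply ℝ ℝ (ee i)).hasFDerivAt.comp x
    ((hu.fderiv_right (m := 1) (by norm_num)).differentiable one_ne_zero x).hasFDerivAt

lemma fderiv_gradient_apply {u : E2 → ℝ} (hu : ContDiff ℝ 2 u) (x a : E2) (i : Fin 2) :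
    fderiv ℝ (gradient u) x a i = fderiv ℝ (fderiv ℝ u) x a (ee i) := by
  have hd : DifferentiableAt ℝ (gradient u) x := (contDiff_gradient hu).differentiable one_ne_zero x
  have h : HasFDerivAt (fun y => gradient u y i)
      ((EuclideanSpace.proj i : E2 →L[ℝ] ℝ).comp (fderiv ℝ (gradient u) x)) x :=
    (EuclideanSpace.proj i : E2 →L[ℝ] ℝ).hasFDerivAt.comp x hd.hasFDerivAt
  simp only [gradient_apply] at h
  exact DFunLike.congr_fun (h.unique (hasFDerivAt_pd hu i x)) a

lemma clm_apply_eq_sum (L : E2 →L[ℝ] ℝ) (y : E2) : L y = ∑ i, L (ee i) * y i := by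
  conv_lhs => rw [eq_sum_smul_ee y]
  simp [mul_comm]

lemma eq_affine_of_fderiv_fderiv_eq_zero {u : E2 → ℝ} (hu : ContDiff ℝ 2 u)
    (h : ∀ x, fderiv ℝ (fderiv ℝ u) x = 0) :
    ∃ a b c : ℝ, ∀ x : E2, u x = a * x 0 + b * x 1 + c := by
  have hd : Differentiable ℝ (fderiv ℝ u) :=
    (hu.fderiv_right (m := 1) (by norm_num)).differentiable one_ne_zero
  have hconst : ∀ x, fderiv ℝ u x = fderiv ℝ u 0 := fun x =>
    is_const_of_fderiv_eq_zero hd h x 0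
  have hdiff : Differentiable ℝ fun x => u x - fderiv ℝ u 0 x :=
    (hu.differentiable two_ne_zero).sub (fderiv ℝ u 0).differentiable
  have hsub : ∀ x, u x - fderiv ℝ u 0 x = u 0 - fderiv ℝ u 0 0 := fun x =>
    is_const_of_fderiv_eq_zero hdiff (fun y => by
      rw [fderiv_fun_sub (hu.differentiable two_ne_zero y) (fderiv ℝ u 0).differentiableAt,
        ContinuousLinearMap.fderiv, hconst, sub_self]) x 0
  refine ⟨fderiv ℝ u 0 (ee 0), fderiv ℝ u 0 (ee 1), u 0, fun x => ?_⟩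
  have := hsub x
  rw [clm_apply_eq_sum _ x, Fin.sum_univ_two, map_zero] at this
  linarith

/-- The bounded increasing function `arctan ∘ arsinh` and its derivative. -/
lemma hasDerivAt_arctan_arsinh (t : ℝ) :
    HasDerivAt (fun s => arctan (arsinh s)) ((1 + arsinh t ^ 2) * √(1 + t ^ 2))⁻¹ t := by
  convert (hasDerivAt_arsinh t).arctan using 1
  rw [mul_inv, one_div]

lemma arctan_sq_le (t : ℝ) : arctan t ^ 2 ≤ 4 := by
  have h1 := arctan_lt_pi_div_two t
  have h2 := neg_pi_div_two_lt_arctan t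
  have h3 := pi_lt_four
  nlinarith

/-- Weighted Cauchy–Schwarz inequality for a positive semidefinite form, with weights `g`, `k`. -/
lemma neg_two_mul_le_of_form_nonneg {B : E2 →L[ℝ] E2 →L[ℝ] ℝ} (hsymm : ∀ a b, B a b = B b a)
    (hB : ∀ a, 0 ≤ B a a) (w z : E2) (η g : ℝ) {k ε : ℝ} (hk : 0 < k) (hε : 0 < ε) :
    -(2 * η * g * B w z) ≤ ε * (η ^ 2 * (k * B w w)) + g ^ 2 * k⁻¹ * B z z / ε := by
  have h := hB ((ε * k * η) • w + g • z)
  simp only [map_add, map_smul, add_apply, smul_apply,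
    smul_eq_mul, hsymm z w] at h
  have hεk : 0 < ε * k := by positivity
  have heq : ε * (η ^ 2 * (k * B w w)) + g ^ 2 * k⁻¹ * B z z / ε + 2 * η * g * B w z =
      (ε * k * η * (ε * k * η * B w w + g * B w z) +
        g * (ε * k * η * B w z + g * B z z)) / (ε * k) := by
    field_simp
    ring
  have hq : 0 ≤ ε * (η ^ 2 * (k * B w w)) + g ^ 2 * k⁻¹ * B z z / ε + 2 * η * g * B w z := by
    rw [heq]
    refine div_nonneg (h.trans_eq ?_) hεk.le
    ring
  linarith

theorem statement9 (f u : E2 → ℝ)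
    (hf : ContDiff ℝ 2 f)
    (hpos : ∀ p q : E2, q ≠ 0 → 0 < Hess f p q)
    (Lam : ℝ) (hLam : 0 < Lam)
    (hgrow : ∀ p : E2, ‖iteratedFDeriv ℝ 2 f p‖ ≤ Lam / (1 + ‖p‖))
    (hu : ContDiff ℝ 2 u) (heq : solves f u)
    (K : ℝ) (hK : 0 < K)
    (hbd : ∀ x : E2, |pd u 1 x| * (Real.log (1 + |pd u 1 x|)) ^ 2 ≤ K * (|pd u 0 x| + 1)) :
    ∃ a b c : ℝ, ∀ x : E2, u x = a * x 0 + b * x 1 + c := by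
  set F : Fin 2 → E2 → ℝ := fun i y => fderiv ℝ f (gradient u y) (ee i)
  set A : E2 → E2 →L[ℝ] E2 →L[ℝ] ℝ := fun x => fderiv ℝ (fderiv ℝ f) (gradient u x)
  set w : E2 → E2 := fun x => fderiv ℝ (gradient u) x (ee 1) with hw
  set v : E2 → ℝ := pd u 1
  set g : ℝ → ℝ := fun t => arctan (arsinh t) with hg
  set k : ℝ → ℝ := fun t => ((1 + arsinh t ^ 2) * √(1 + t ^ 2))⁻¹ with hk
  have hf1 : ContDiff ℝ 1 (fderiv ℝ f) := hf.fderiv_right (by norm_num)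
  have hG : ContDiff ℝ 1 (gradient u) := contDiff_gradient hu
  have hv1 : ContDiff ℝ 1 v := (hu.fderiv_right (m := 1) (by norm_num)).clm_apply contDiff_const
  have hF1 : ∀ i, ContDiff ℝ 1 (F i) := fun i => (hf1.comp hG).clm_apply contDiff_const
  have hFd : ∀ i x a, fderiv ℝ (F i) x a = A x (fderiv ℝ (gradient u) x a) (ee i) := by
    intro i x a
    have h : HasFDerivAt (F i) ((ContinuousLinearMap.apply ℝ ℝ (ee i)).comp
        ((A x).comp (fderiv ℝ (gradient u) x))) x :=
      (ContinuousLinearMap.apply ℝ ℝ (ee i)).hasFDerivAt.comp x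
        ((hf1.differentiable one_ne_zero _).hasFDerivAt.comp x
          (hG.differentiable one_ne_zero x).hasFDerivAt)
    rw [h.fderiv]
    rfl
  have hsymm : ∀ x a b, A x a b = A x b a := fun x => fderiv_fderiv_comm hf (gradient u x)
  have hApos : ∀ x a, a ≠ 0 → 0 < A x a a := fun x a ha => by
    simpa only [Hess_eq] using hpos (gradient u x) a ha
  have hAnn : ∀ x a, 0 ≤ A x a a := fun x a => by
    rcases eq_or_ne a 0 with rfl | ha
    · simp
    · exact (hApos x a ha).le
  have hAle : ∀ x a, A x a a ≤ Lam / (1 + ‖gradient u x‖) * ‖a‖ ^ 2 := fun x a => by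
    have h1 := (iteratedFDeriv ℝ 2 f (gradient u x)).le_opNorm ![a, a]
    rw [iteratedFDeriv_two_apply] at h1
    simp only [Fin.prod_univ_two, Matrix.cons_val_zero, Matrix.cons_val_one] at h1
    calc A x a a ≤ ‖A x a a‖ := le_norm_self _
      _ ≤ _ := h1
      _ ≤ _ := by
        rw [← sq]
        gcongr
        exact hgrow _
  have hwv : ∀ x i, w x i = fderiv ℝ v x (ee i) := fun x i => by
    rw [hw, fderiv_gradient_apply hu, fderiv_fderiv_comm hu, (hasFDerivAt_pd hu 1 x).fderiv]
    rfl
  have hAc : Continuous A := (hf1.continuous_fderiv one_ne_zero).comp hG.continuous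
  have hwc : Continuous w := (hG.continuous_fderiv one_ne_zero).clm_apply continuous_const
  have hgc : ContDiff ℝ 1 g := contDiff_arctan.comp contDiff_arsinh
  have hkpos : ∀ t, 0 < k t := fun t => by positivity
  have hkc : Continuous k := by
    refine Continuous.inv₀ ?_ fun t => by positivity
    have := continuous_arsinh
    fun_prop
  have hψ : ∀ x, k (v x) * A x (w x) (w x) = 0 := by
    refine eq_zero_of_caccioppoli (C := 64 * (1 + K) * Lam)
      ((hkc.comp hv1.continuous).mul ((hAc.clm_apply hwc).clm_apply hwc))
      (fun x => mul_nonneg (hkpos _).le (hAnn x _)) (by positivity) fun η hη hηc => ?_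
    have hηg : ∀ x i, gradient η x i = fderiv ℝ η x (ee i) := gradient_apply η
    have hnorm : ∀ x, ‖gradient η x‖ = ‖fderiv ℝ η x‖ := fun x =>
      (InnerProductSpace.toDual ℝ E2).symm.norm_map _
    have hηgc : Continuous (gradient η) :=
      (InnerProductSpace.toDual ℝ E2).symm.continuous.comp (hη.continuous_fderiv one_ne_zero)
    have hXc : Continuous fun x => -(2 * η x * g (v x) * A x (w x) (gradient η x)) :=
      (((continuous_const.mul hη.continuous).mul (hgc.continuous.comp hv1.continuous)).mul
        ((hAc.clm_apply hwc).clm_apply hηgc)).neg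
    refine ⟨fun x => -(2 * η x * g (v x) * A x (w x) (gradient η x)), hXc,
      fun x hx => by simp [hx], fun x hx => by simp [gradient, hx], ?_, fun ε hε x => ?_⟩
    · have hφc : HasCompactSupport fun x => η x ^ 2 * g (v x) :=
        HasCompactSupport.intro hηc fun x hx => by simp [image_eq_zero_of_notMem_tsupport hx]
      have hweak := integral_sum_fderiv_mul_fderiv_eq_zero hF1 heq (ee 1)
        (φ := fun x => η x ^ 2 * g (v x)) ((hη.pow 2).mul (hgc.comp hv1)) hφc
      have hφd : ∀ x a, fderiv ℝ (fun y => η y ^ 2 * g (v y)) x a =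
          2 * η x * g (v x) * fderiv ℝ η x a + η x ^ 2 * k (v x) * fderiv ℝ v x a := by
        intro x a
        have h1 := (hη.differentiable one_ne_zero x).hasFDerivAt.pow 2
        have h2 := (hasDerivAt_arctan_arsinh (v x)).comp_hasFDerivAt x
          (hv1.differentiable one_ne_zero x).hasFDerivAt
        have h3 := (h1.mul h2).fderiv
        have h4 := DFunLike.congr_fun h3 a
        refine h4.trans ?_
        simp [hg, hk]
        ring
      have hpt : ∀ x, ∑ i, fderiv ℝ (F i) x (ee 1) *
          fderiv ℝ (fun y => η y ^ 2 * g (v y)) x (ee i) =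
          η x ^ 2 * (k (v x) * A x (w x) (w x)) -
            -(2 * η x * g (v x) * A x (w x) (gradient η x)) := by
        intro x
        rw [clm_apply_eq_sum (A x (w x)) (w x), clm_apply_eq_sum (A x (w x)) (gradient η x)]
        simp only [hFd, hφd, hwv, hηg, Fin.sum_univ_two]
        ring
      have hi1 : Integrable fun x => η x ^ 2 * (k (v x) * A x (w x) (w x)) :=
        ((hη.continuous.pow 2).mul ((hkc.comp hv1.continuous).mul
          ((hAc.clm_apply hwc).clm_apply hwc))).integrable_of_hasCompactSupport
          (HasCompactSupport.intro hηc fun x hx => by simp [image_eq_zero_of_notMem_tsupport hx])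
      have hi2 := hXc.integrable_of_hasCompactSupport (μ := volume)
        (HasCompactSupport.intro hηc fun x hx => by simp [image_eq_zero_of_notMem_tsupport hx])
      rw [integral_congr_ae (Filter.Eventually.of_forall hpt), integral_sub hi1 hi2] at hweak
      exact sub_eq_zero.1 hweak
    · refine (neg_two_mul_le_of_form_nonneg (hsymm x) (hAnn x) (w x) (gradient η x) (η x)
        (g (v x)) (hkpos (v x)) hε).trans (add_le_add le_rfl ?_)
      have hk1 : (k (v x))⁻¹ ≤ 16 * ((1 + K) * (1 + ‖gradient u x‖)) := by
        have h0 : |pd u 0 x| ≤ ‖gradient u x‖ := by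
          rw [← gradient_apply, ← Real.norm_eq_abs]
          exact PiLp.norm_apply_le _ _
        rw [hk, inv_inv]
        refine (one_add_arsinh_sq_mul_sqrt_le (v x)).trans ?_
        nlinarith [hbd x, norm_nonneg (gradient u x)]
      rw [div_mul_eq_mul_div]
      refine div_le_div_of_nonneg_right ?_ hε.le
      calc g (v x) ^ 2 * (k (v x))⁻¹ * A x (gradient η x) (gradient η x)
          ≤ 4 * (16 * ((1 + K) * (1 + ‖gradient u x‖))) *
            (Lam / (1 + ‖gradient u x‖) * ‖gradient η x‖ ^ 2) := by
            have := inv_pos.2 (hkpos (v x))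
            have := hAnn x (gradient η x)
            exact mul_le_mul (mul_le_mul (arctan_sq_le _) hk1 (by positivity) (by norm_num))
              (hAle x _) this (by positivity)
        _ = 64 * (1 + K) * Lam * ‖fderiv ℝ η x‖ ^ 2 := by
            rw [hnorm]
            have : (1 + ‖gradient u x‖) ≠ 0 := by positivity
            field_simp
            ring
  have hw0 : ∀ x, w x = 0 := fun x => by
    by_contra hne
    exact (mul_pos (hkpos (v x)) (hApos x _ hne)).ne' (hψ x)
  have hH1 : ∀ x i, fderiv ℝ (fderiv ℝ u) x (ee 1) (ee i) = 0 := fun x i => by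
    rw [← fderiv_gradient_apply hu]
    exact congrArg (fun y : E2 => y i) (hw0 x)
  have hH0 : ∀ x, fderiv ℝ (fderiv ℝ u) x (ee 0) (ee 0) = 0 := fun x => by
    have hx := heq x
    change ∑ i, fderiv ℝ (F i) x (ee i) = 0 at hx
    have hvec : fderiv ℝ (gradient u) x (ee 0) =
        fderiv ℝ (fderiv ℝ u) x (ee 0) (ee 0) • ee 0 := by
      rw [eq_sum_smul_ee (fderiv ℝ (gradient u) x (ee 0)), fderiv_gradient_apply hu,
        fderiv_gradient_apply hu, fderiv_fderiv_comm hu x (ee 0) (ee 1), hH1]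
      simp
    have hw0' : fderiv ℝ (gradient u) x (ee 1) = 0 := hw0 x
    simp only [Fin.sum_univ_two, hFd, hw0', hvec, map_smul, map_zero,
      smul_apply, zero_apply, add_zero, smul_eq_mul] at hx
    refine (mul_eq_zero.1 hx).resolve_right (hApos x _ ?_).ne'
    simp [ee]
  refine eq_affine_of_fderiv_fderiv_eq_zero hu fun x => ?_
  ext a b
  rw [clm_apply_eq_sum _ b]
  simp only [fderiv_fderiv_comm hu x a, clm_apply_eq_sum _ a, Fin.sum_univ_two, hH1, hH0,
    fderiv_fderiv_comm hu x (ee 0) (ee 1)]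
  simp
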